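/- Let C_n be the cycle on n vertices, n ≥ 3. Then the treewidth of the toroidal grid C_n □ C_n is at least 2n − 5. -/

import Mathlib

open SimpleGraph

/-- A tree decomposition of a graph `G`: a tree together with bags of vertices
indexed by the tree, covering all edges, such that for each vertex the set of
bags containing it induces a non-empty connected subtree. -/
structure TreeDecomposition {V : Type*} (G : SimpleGraph V) where
  ι : Type
  fintype_ι : Fintype ι
  tree : SimpleGraph ι
  isTree : tree.IsTree
  bag : ι → Finset V
  covers_edge : ∀ ⦃v w : V⦄, G.Adj v w → ∃ x : ι, v ∈ bag x ∧ w ∈ bag x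
  support_connected : ∀ v : V, (tree.induce {x : ι | v ∈ bag x}).Connected

/-- The width of a tree decomposition: maximum bag size minus one. -/
noncomputable def TreeDecomposition.width {V : Type*} {G : SimpleGraph V}
    (d : TreeDecomposition G) : ℕ :=
  letI := d.fintype_ι
  (Finset.univ.sup fun x : d.ι => (d.bag x).card) - 1

/-- The treewidth of a graph: minimum width of a tree decomposition. -/
noncomputable def treewidth {V : Type*} (G : SimpleGraph V) : ℕ :=
  sInf {w : ℕ | ∃ d : TreeDecomposition G, d.width = w}

/-- A graph is `k`-connected if it has more than `k` vertices and remains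
connected after deletion of any fewer than `k` vertices. -/
def IsKConnected {V : Type*} [Fintype V] (k : ℕ) (G : SimpleGraph V) : Prop :=
  k < Fintype.card V ∧
    ∀ S : Finset V, S.card < k → ((⊤ : G.Subgraph).deleteVerts ↑S).Connected

/-!
A bramble is a family of pairwise touching connected vertex sets. The nodes of a tree decomposition
whose bags meet a given connected set form a subtree, and touching sets have intersecting subtrees.
By the Helly property of subtrees some bag meets every set of the bramble, so a bramble without a
hitting set of fewer than `k` vertices forces treewidth at least `k - 1`.

If `G` and `H` are `k`-connected with at least `n` vertices each and `S` is a set of fewer than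
`k * (n + 2 - 2 * k)` vertices of `G □ H`, then at least `2 * k - 1` rows and at least `2 * k - 1`
columns contain fewer than `k` points of `S`. By `k`-connectedness these rows and columns stay
connected after deletion of `S`, and there are enough of them that together they are connected and
that the unions obtained from two sets `S` and `S'` intersect. These unions form the bramble. For
cycles `k = 2`.
-/

open Finset

section HellyTree

variable {ι : Type*} {T : SimpleGraph ι}

lemma reachable_deleteEdges_of_notMem {A : Set ι} (hA : (T.induce A).Preconnected) {e : Sym2 ι}
    {x u v : ι} (hx : x ∉ A) (hxe : x ∈ e) (hu : u ∈ A) (hv : v ∈ A) :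
    (T.deleteEdges {e}).Reachable u v := by
  let inclusion : T.induce A →g T.deleteEdges {e} :=
    { toFun := Subtype.val
      map_rel' := by
        rintro ⟨a, ha⟩ ⟨b, hb⟩ hab
        refine deleteEdges_adj.2 ⟨hab, ?_⟩
        rintro rfl
        rcases Sym2.mem_iff.1 hxe with rfl | rfl
        exacts [hx ha, hx hb] }
  exact (hA ⟨u, hu⟩ ⟨v, hv⟩).map inclusion

lemma exists_adj_preconnected_superset (hT : T.Connected) {s : Set ι}
    (hs : (T.induce s).Preconnected) (hne : s.Nonempty) {x : ι} (hx : x ∉ s) :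
    ∃ y, T.Adj x y ∧ ∃ A, s ⊆ A ∧ y ∈ A ∧ x ∉ A ∧ (T.induce A).Preconnected := by
  obtain ⟨w, hw⟩ := hne
  obtain ⟨p, hp⟩ := hT.exists_isPath x w
  cases p with
  | nil => exact absurd hw hx
  | @cons _ y _ hxy q =>
    have hxq : x ∉ q.support := (Walk.cons_isPath_iff hxy q).1 hp |>.2
    refine ⟨y, hxy, {v | v ∈ q.support} ∪ s, Set.subset_union_right, .inl q.start_mem_support,
      by simp [hxq, hx], ?_⟩
    exact (induce_union_connected q.connected_induce_support.preconnected hs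
      ⟨w, q.end_mem_support, hw⟩).preconnected

lemma exists_adj_swap [Finite ι] (hT : T.IsTree) {f : ι → ι} (hf : ∀ x, T.Adj x (f x)) :
    ∃ x, f (f x) = x := by
  classical
  have := Fintype.ofFinite ι
  have hcard : #T.edgeFinset < #(univ : Finset ι) := by
    rw [card_univ, ← hT.card_edgeFinset]
    exact Nat.lt_succ_self _
  obtain ⟨x, -, y, -, hne, heq⟩ := exists_ne_map_eq_of_card_lt_of_maps_to hcard
    (f := fun x ↦ s(x, f x)) fun x _ ↦ mem_edgeFinset.2 (hf x)
  rcases Sym2.eq_iff.1 heq with ⟨hxy, -⟩ | ⟨hx, hy⟩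
  · exact absurd hxy hne
  · exact ⟨x, by rw [hy, ← hx]⟩

theorem helly_isTree [Finite ι] (hT : T.IsTree) {𝓢 : Set (Set ι)}
    (hconn : ∀ s ∈ 𝓢, (T.induce s).Preconnected) (hinter : ∀ s ∈ 𝓢, ∀ t ∈ 𝓢, (s ∩ t).Nonempty) :
    ∃ x, ∀ s ∈ 𝓢, x ∈ s := by
  by_contra! hmiss
  choose s hs hxs using hmiss
  -- If each `x` misses `s x`, step from `x` towards `s x`. Some edge is traversed both ways, and
  -- a common point of the two missed subtrees would join its ends without using it.
  have hstep (x : ι) := exists_adj_preconnected_superset hT.connected (hconn _ (hs x))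
    (by simpa only [Set.inter_self] using hinter _ (hs x) _ (hs x)) (hxs x)
  choose f hadj A hsA hfA hxA hA using hstep
  obtain ⟨x, hx⟩ := exists_adj_swap hT hadj
  obtain ⟨z, hzx, hzy⟩ := hinter _ (hs x) _ (hs (f x))
  have hbridge := isAcyclic_iff_forall_adj_isBridge.1 hT.isAcyclic (hadj x)
  have hyz : (T.deleteEdges {s(x, f x)}).Reachable (f x) z :=
    reachable_deleteEdges_of_notMem (hA x) (hxA x) (Sym2.mem_mk_left _ _) (hfA x) (hsA x hzx)
  have hxz : (T.deleteEdges {s(x, f x)}).Reachable x z :=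
    reachable_deleteEdges_of_notMem (hA (f x)) (hxA (f x)) (Sym2.mem_mk_right _ _)
      (by simpa only [hx] using hfA (f x)) (hsA (f x) hzy)
  exact isBridge_iff.1 hbridge (hxz.trans hyz.symm)

end HellyTree

section Bramble

variable {V : Type*} {G : SimpleGraph V}

/-- A bramble of `G`: a family of connected vertex sets any two of which touch, that is, share a
vertex or are joined by an edge. Brambles are the obstructions to small treewidth. -/
structure IsBramble (G : SimpleGraph V) (𝓑 : Set (Set V)) : Prop where
  connected : ∀ A ∈ 𝓑, (G.induce A).Connected
  touch : ∀ A ∈ 𝓑, ∀ B ∈ 𝓑, ∃ a ∈ A, ∃ b ∈ B, a = b ∨ G.Adj a b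

namespace TreeDecomposition

/-- The nodes of a tree decomposition whose bags meet `A`, the union of the subtrees belonging to
the vertices in `A`. -/
def support (d : TreeDecomposition G) (A : Set V) : Set d.ι :=
  {x | ∃ a ∈ A, a ∈ d.bag x}

lemma exists_mem_bag (d : TreeDecomposition G) (v : V) : ∃ x, v ∈ d.bag x :=
  nonempty_subtype.1 (d.support_connected v).nonempty

lemma induce_support_preconnected (d : TreeDecomposition G) {A : Set V}
    (hA : (G.induce A).Preconnected) : (d.tree.induce (d.support A)).Preconnected := by
  have reachable_of_mem (a : A) (x y : d.support A) (hx : ↑a ∈ d.bag x) (hy : ↑a ∈ d.bag y) :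
      (d.tree.induce (d.support A)).Reachable x y :=
    have hsub : {z | ↑a ∈ d.bag z} ⊆ d.support A := fun _ hz ↦ ⟨a, a.2, hz⟩
    ((d.support_connected a).preconnected ⟨x, hx⟩ ⟨y, hy⟩).map (induceHomOfLE _ hsub).toHom
  have reachable_of_walk {a b : A} (w : (G.induce A).Walk a b) (x y : d.support A)
      (hx : ↑a ∈ d.bag x) (hy : ↑b ∈ d.bag y) : (d.tree.induce (d.support A)).Reachable x y := by
    induction w generalizing x with
    | nil => exact reachable_of_mem _ x y hx hy
    | @cons a c _ hac _ ih =>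
      obtain ⟨z, haz, hcz⟩ := d.covers_edge hac
      let z' : d.support A := ⟨z, a, a.2, haz⟩
      exact (reachable_of_mem a x z' hx haz).trans (ih z' hcz hy)
  rintro ⟨x, a, ha, hax⟩ ⟨y, b, hb, hby⟩
  obtain ⟨w⟩ := hA ⟨a, ha⟩ ⟨b, hb⟩
  exact reachable_of_walk w _ _ hax hby

lemma exists_bag_hitting (d : TreeDecomposition G) {𝓑 : Set (Set V)} (h𝓑 : IsBramble G 𝓑) :
    ∃ x, ∀ A ∈ 𝓑, ∃ a ∈ A, a ∈ d.bag x := by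
  have := d.fintype_ι
  have hinter : ∀ A ∈ 𝓑, ∀ B ∈ 𝓑, (d.support A ∩ d.support B).Nonempty := by
    intro A hA B hB
    obtain ⟨a, ha, b, hb, rfl | hab⟩ := h𝓑.touch A hA B hB
    · obtain ⟨x, hx⟩ := d.exists_mem_bag a
      exact ⟨x, ⟨a, ha, hx⟩, a, hb, hx⟩
    · obtain ⟨x, hax, hbx⟩ := d.covers_edge hab
      exact ⟨x, ⟨a, ha, hax⟩, ⟨b, hb, hbx⟩⟩
  obtain ⟨x, hx⟩ := helly_isTree d.isTree (𝓢 := d.support '' 𝓑)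
    (Set.forall_mem_image.2 fun A hA ↦
      d.induce_support_preconnected (h𝓑.connected A hA).preconnected)
    (Set.forall_mem_image.2 fun A hA ↦ Set.forall_mem_image.2 fun B hB ↦ hinter A hA B hB)
  exact ⟨x, fun A hA ↦ hx _ (Set.mem_image_of_mem _ hA)⟩

lemma card_bag_le_width_add_one (d : TreeDecomposition G) (x : d.ι) :
    #(d.bag x) ≤ d.width + 1 := by
  let := d.fintype_ι
  have hle : #(d.bag x) ≤ univ.sup fun y ↦ #(d.bag y) :=
    le_sup (f := fun y ↦ #(d.bag y)) (mem_univ x)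
  simp only [width]
  lia

/-- The decomposition with a single bag, which shows that a finite graph has a tree decomposition,
so that its treewidth is not the junk value `sInf ∅ = 0`. -/
def trivial [Fintype V] (G : SimpleGraph V) : TreeDecomposition G where
  ι := Unit
  fintype_ι := inferInstance
  tree := ⊥
  isTree := IsTree.of_subsingleton
  bag _ := univ
  covers_edge _ _ _ := ⟨(), mem_univ _, mem_univ _⟩
  support_connected v :=
    have : Nonempty {_x : Unit | v ∈ (univ : Finset V)} := ⟨⟨(), mem_univ v⟩⟩
    { preconnected := fun a b ↦ by rw [Subsingleton.elim a b] }

end TreeDecomposition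

lemma le_treewidth_of_forall_le_width [Finite V] {w : ℕ}
    (h : ∀ d : TreeDecomposition G, w ≤ d.width) : w ≤ treewidth G := by
  have := Fintype.ofFinite V
  refine le_csInf ⟨_, TreeDecomposition.trivial G, rfl⟩ ?_
  rintro _ ⟨d, rfl⟩
  exact h d

theorem IsBramble.le_treewidth [Finite V] {𝓑 : Set (Set V)} (h𝓑 : IsBramble G 𝓑) {k : ℕ}
    (hk : ∀ S : Finset V, (∀ A ∈ 𝓑, ∃ a ∈ A, a ∈ S) → k ≤ #S) : k - 1 ≤ treewidth G := by
  refine le_treewidth_of_forall_le_width fun d ↦ ?_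
  obtain ⟨x, hx⟩ := d.exists_bag_hitting h𝓑
  exact Nat.sub_le_of_le_add ((hk _ hx).trans (d.card_bag_le_width_add_one x))

end Bramble

section IsKConnected

variable {V V' : Type*} [Fintype V] {G : SimpleGraph V} {G' : SimpleGraph V'} {k : ℕ}

lemma isKConnected_iff_induce_compl :
    IsKConnected k G ↔ k < Fintype.card V ∧
      ∀ S : Finset V, #S < k → (G.induce (S : Set V)ᶜ).Connected := by
  simp only [IsKConnected, connected_induce_iff, Subgraph.deleteVerts, Subgraph.verts_top,
    Set.compl_eq_univ_sdiff]

lemma IsKConnected.reachable_induce (hG : IsKConnected k G) (f : G →g G') {S : Finset V}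
    (hS : #S < k) {A : Set V'} (hA : ∀ v ∉ S, f v ∈ A) {u v : V} (hu : u ∉ S) (hv : v ∉ S) :
    (G'.induce A).Reachable ⟨f u, hA u hu⟩ ⟨f v, hA v hv⟩ :=
  let restriction : G.induce (S : Set V)ᶜ →g G'.induce A :=
    { toFun := fun x ↦ ⟨f x, hA x x.2⟩
      map_rel' := fun h ↦ f.map_rel h }
  (((isKConnected_iff_induce_compl.1 hG).2 S hS).preconnected ⟨u, hu⟩ ⟨v, hv⟩).map restriction

lemma cycleGraph_induce_compl_singleton_connected {n : ℕ} (s : Fin (n + 2)) :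
    ((cycleGraph (n + 2)).induce {s}ᶜ).Connected := by
  have sub_eq_one {i j : Fin (n + 1)} (hij : i.val + 1 = j.val) : (j.succ - i.succ).val = 1 := by
    rw [Fin.sub_val_of_le (Fin.succ_le_succ_iff.2 (by lia)), Fin.val_succ, Fin.val_succ]
    lia
  let rotation : pathGraph (n + 1) →g (cycleGraph (n + 2)).induce {s}ᶜ :=
    { toFun := fun i ↦ ⟨s + i.succ, by simp [Fin.succ_ne_zero]⟩
      map_rel' := by
        intro i j hij
        simp only [comap_adj, Function.Embedding.subtype_apply, cycleGraph_adj',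
          add_sub_add_left_eq_sub]
        exact (pathGraph_adj.1 hij).symm.imp sub_eq_one sub_eq_one }
  refine (pathGraph_connected n).map rotation ?_
  rintro ⟨t, ht⟩
  obtain ⟨i, hi⟩ := Fin.exists_succ_eq.2 (sub_ne_zero.2 ht)
  exact ⟨i, Subtype.ext (by simp [rotation, hi])⟩

theorem isKConnected_two_cycleGraph {n : ℕ} (hn : 3 ≤ n) : IsKConnected 2 (cycleGraph n) := by
  obtain ⟨m, rfl⟩ : ∃ m, n = m + 2 := ⟨n - 2, by lia⟩
  refine isKConnected_iff_induce_compl.2 ⟨by rwa [Fintype.card_fin], fun S hS ↦ ?_⟩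
  rcases Nat.le_one_iff_eq_zero_or_eq_one.1 (Nat.le_of_lt_succ hS) with hS | hS
  · rw [card_eq_zero.1 hS, coe_empty, Set.compl_empty]
    exact (induceUnivIso _).connected_iff.2 cycleGraph_connected
  · obtain ⟨s, rfl⟩ := card_eq_one.1 hS
    rw [coe_singleton]
    exact cycleGraph_induce_compl_singleton_connected s

end IsKConnected

section LightFibers

variable {α β : Type*} [Fintype α] [DecidableEq α]

/-- The points over which the fibre of `f` contains fewer than `k` points of `S`. With `f` a
projection of a product, these are the rows or the columns in which `S` is sparse. -/
def lightFibers (f : β → α) (S : Finset β) (k : ℕ) : Finset α :=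
  {a | #{p ∈ S | f p = a} < k}

variable {f : β → α} {S : Finset β} {k : ℕ}

lemma mem_lightFibers {a : α} : a ∈ lightFibers f S k ↔ #{p ∈ S | f p = a} < k := by
  simp only [lightFibers, mem_filter_univ]

lemma mul_card_compl_lightFibers_le : k * #(lightFibers f S k)ᶜ ≤ #S :=
  calc k * #(lightFibers f S k)ᶜ
    _ ≤ #{p ∈ S | f p ∈ (lightFibers f S k)ᶜ} := by
        refine mul_card_image_le_card_of_maps_to (f := f) (fun p hp ↦ (mem_filter.1 hp).2) k ?_
        intro a ha
        have hheavy : k ≤ #{p ∈ S | f p = a} := by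
          simpa only [mem_compl, mem_lightFibers, not_lt] using ha
        refine hheavy.trans (card_le_card fun p hp ↦ ?_)
        obtain ⟨hpS, rfl⟩ := mem_filter.1 hp
        exact mem_filter.2 ⟨mem_filter.2 ⟨hpS, ha⟩, rfl⟩
    _ ≤ #S := card_filter_le _ _

lemma lt_card_lightFibers {n : ℕ} (hn : n ≤ Fintype.card α) (hS : #S < k * (n + 2 - 2 * k)) :
    2 * (k - 1) < #(lightFibers f S k) := by
  have hheavy : #(lightFibers f S k)ᶜ < n + 2 - 2 * k :=
    lt_of_mul_lt_mul_left (mul_card_compl_lightFibers_le.trans_lt hS) k.zero_le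
  have hcard := card_add_card_compl (lightFibers f S k)
  lia

lemma card_filter_mem_lightFibers_le :
    #{p ∈ S | f p ∈ lightFibers f S k} ≤ (k - 1) * #(lightFibers f S k) := by
  refine card_le_mul_card_image_of_maps_to (f := f) (fun p hp ↦ (mem_filter.1 hp).2) _ ?_
  intro a ha
  refine (card_le_card (filter_subset_filter _ (filter_subset _ _))).trans ?_
  exact Nat.le_sub_one_of_lt (mem_lightFibers.1 ha)

end LightFibers

section LightCross

variable {V W : Type*} [Fintype V] [Fintype W] [DecidableEq V] [DecidableEq W]
variable {G : SimpleGraph V} {H : SimpleGraph W} {S S' : Finset (V × W)} {k n : ℕ}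

/-- The points outside `S` lying in a row or a column with fewer than `k` points of `S`. A row is a
fibre of `Prod.fst`, a copy of the second factor. -/
def lightCross (S : Finset (V × W)) (k : ℕ) : Set (V × W) :=
  {p | p ∉ S ∧ (p.1 ∈ lightFibers Prod.fst S k ∨ p.2 ∈ lightFibers Prod.snd S k)}

lemma card_row_lt {v : V} (hv : v ∈ lightFibers Prod.fst S k) : #{w | (v, w) ∈ S} < k := by
  refine lt_of_le_of_lt ?_ (mem_lightFibers.1 hv)
  exact card_le_card_of_injOn (Prod.mk v)
    (fun w hw ↦ mem_filter.2 ⟨(mem_filter_univ w).1 hw, rfl⟩) (Prod.mk_right_injective v).injOn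

lemma card_column_lt {w : W} (hw : w ∈ lightFibers Prod.snd S k) : #{v | (v, w) ∈ S} < k := by
  refine lt_of_le_of_lt ?_ (mem_lightFibers.1 hw)
  exact card_le_card_of_injOn (Prod.mk · w)
    (fun v hv ↦ mem_filter.2 ⟨(mem_filter_univ v).1 hv, rfl⟩) (Prod.mk_left_injective w).injOn

lemma reachable_of_mem_light_row (hH : IsKConnected k H) {v : V} {w w' : W}
    (hv : v ∈ lightFibers Prod.fst S k) (hw : (v, w) ∉ S) (hw' : (v, w') ∉ S) :
    ((G □ H).induce (lightCross S k)).Reachable ⟨(v, w), hw, .inl hv⟩ ⟨(v, w'), hw', .inl hv⟩ :=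
  hH.reachable_induce (G.boxProdRight H v).toHom (card_row_lt hv)
    (A := lightCross S k) (fun _ hx ↦ ⟨by simpa using hx, .inl hv⟩)
    (by simpa using hw) (by simpa using hw')

lemma reachable_of_mem_light_column (hG : IsKConnected k G) {v v' : V} {w : W}
    (hw : w ∈ lightFibers Prod.snd S k) (hv : (v, w) ∉ S) (hv' : (v', w) ∉ S) :
    ((G □ H).induce (lightCross S k)).Reachable ⟨(v, w), hv, .inr hw⟩ ⟨(v', w), hv', .inr hw⟩ :=
  hG.reachable_induce (G.boxProdLeft H w).toHom (card_column_lt hw)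
    (A := lightCross S k) (fun _ hx ↦ ⟨by simpa using hx, .inr hw⟩)
    (by simpa using hv) (by simpa using hv')

lemma exists_light_row_notMem (hV : n ≤ Fintype.card V) (hS : #S < k * (n + 2 - 2 * k)) {w : W}
    (hw : w ∈ lightFibers Prod.snd S k) : ∃ v ∈ lightFibers Prod.fst S k, (v, w) ∉ S := by
  have hrows : 2 * (k - 1) < #(lightFibers Prod.fst S k) := lt_card_lightFibers hV hS
  obtain ⟨v, hv, hvw⟩ := exists_mem_notMem_of_card_lt_card
    (show #{v | (v, w) ∈ S} < #(lightFibers Prod.fst S k) by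
      have := card_column_lt hw
      lia)
  exact ⟨v, hv, by simpa using hvw⟩

lemma exists_light_column_notMem (hW : n ≤ Fintype.card W) (hS : #S < k * (n + 2 - 2 * k))
    {v v' : V} (hv : v ∈ lightFibers Prod.fst S k) (hv' : v' ∈ lightFibers Prod.fst S k) :
    ∃ w ∈ lightFibers Prod.snd S k, (v, w) ∉ S ∧ (v', w) ∉ S := by
  have hcols : 2 * (k - 1) < #(lightFibers Prod.snd S k) := lt_card_lightFibers hW hS
  have hunion : #{w | (v, w) ∈ S ∨ (v', w) ∈ S} ≤ 2 * (k - 1) := by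
    rw [filter_or]
    have := card_union_le {w | (v, w) ∈ S} {w | (v', w) ∈ S}
    have := card_row_lt hv
    have := card_row_lt hv'
    lia
  obtain ⟨w, hw, hvw⟩ := exists_mem_notMem_of_card_lt_card (hunion.trans_lt hcols)
  exact ⟨w, hw, by simpa using hvw⟩

lemma reachable_of_light_rows (hG : IsKConnected k G) (hH : IsKConnected k H)
    (hW : n ≤ Fintype.card W) (hS : #S < k * (n + 2 - 2 * k)) {p q : lightCross S k}
    (hp : p.1.1 ∈ lightFibers Prod.fst S k) (hq : q.1.1 ∈ lightFibers Prod.fst S k) :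
    ((G □ H).induce (lightCross S k)).Reachable p q := by
  obtain ⟨w, hw, hpw, hqw⟩ := exists_light_column_notMem hW hS hp hq
  exact (reachable_of_mem_light_row hH hp p.2.1 hpw).trans <|
    (reachable_of_mem_light_column hG hw hpw hqw).trans <|
    reachable_of_mem_light_row hH hq hqw q.2.1

lemma exists_light_row_reachable (hG : IsKConnected k G) (hV : n ≤ Fintype.card V)
    (hS : #S < k * (n + 2 - 2 * k)) (p : lightCross S k) :
    ∃ q : lightCross S k, q.1.1 ∈ lightFibers Prod.fst S k ∧
      ((G □ H).induce (lightCross S k)).Reachable p q := by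
  obtain ⟨p, hpS, hrow | hcol⟩ := p
  · exact ⟨_, hrow, .rfl⟩
  · obtain ⟨v, hv, hvS⟩ := exists_light_row_notMem hV hS hcol
    exact ⟨_, hv, reachable_of_mem_light_column hG hcol hpS hvS⟩

lemma lightCross_inter_nonempty (hV : n ≤ Fintype.card V) (hW : n ≤ Fintype.card W)
    (hS : #S < k * (n + 2 - 2 * k)) (hS' : #S' < k * (n + 2 - 2 * k)) :
    (lightCross S k ∩ lightCross S' k).Nonempty := by
  have hrows : 2 * (k - 1) < #(lightFibers Prod.fst S k) := lt_card_lightFibers hV hS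
  have hcols : 2 * (k - 1) < #(lightFibers Prod.snd S' k) := lt_card_lightFibers hW hS'
  by_contra hempty
  have hcover : lightFibers Prod.fst S k ×ˢ lightFibers Prod.snd S' k ⊆
      {p ∈ S | p.1 ∈ lightFibers Prod.fst S k} ∪ {p ∈ S' | p.2 ∈ lightFibers Prod.snd S' k} := by
    intro p hp
    obtain ⟨hrow, hcol⟩ := mem_product.1 hp
    by_contra hp
    simp only [mem_union, mem_filter, hrow, hcol, and_true, not_or] at hp
    exact hempty ⟨p, ⟨hp.1, .inl hrow⟩, hp.2, .inr hcol⟩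
  have hcard : #(lightFibers Prod.fst S k) * #(lightFibers Prod.snd S' k) ≤
      (k - 1) * #(lightFibers Prod.fst S k) + (k - 1) * #(lightFibers Prod.snd S' k) := by
    rw [← card_product]
    exact (card_le_card hcover).trans <| (card_union_le _ _).trans <|
      add_le_add card_filter_mem_lightFibers_le card_filter_mem_lightFibers_le
  nlinarith

lemma lightCross_connected (hG : IsKConnected k G) (hH : IsKConnected k H)
    (hV : n ≤ Fintype.card V) (hW : n ≤ Fintype.card W) (hS : #S < k * (n + 2 - 2 * k)) :
    ((G □ H).induce (lightCross S k)).Connected := by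
  refine (connected_iff _).2 ⟨fun p q ↦ ?_, ?_⟩
  · obtain ⟨p', hp', hpp'⟩ := exists_light_row_reachable (H := H) hG hV hS p
    obtain ⟨q', hq', hqq'⟩ := exists_light_row_reachable (H := H) hG hV hS q
    exact hpp'.trans <| (reachable_of_light_rows hG hH hW hS hp' hq').trans hqq'.symm
  · simpa only [Set.inter_self] using (lightCross_inter_nonempty hV hW hS hS).to_subtype

theorem isBramble_lightCross (hG : IsKConnected k G) (hH : IsKConnected k H)
    (hV : n ≤ Fintype.card V) (hW : n ≤ Fintype.card W) :
    IsBramble (G □ H) ((lightCross · k) '' {S | #S < k * (n + 2 - 2 * k)}) where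
  connected := Set.forall_mem_image.2 fun _ hS ↦ lightCross_connected hG hH hV hW hS
  touch := Set.forall_mem_image.2 fun _ hS ↦ Set.forall_mem_image.2 fun _ hS' ↦
    let ⟨p, hp, hp'⟩ := lightCross_inter_nonempty hV hW hS hS'
    ⟨p, hp, p, hp', .inl rfl⟩

end LightCross

theorem treewidth_cycle_boxProd_ge_general {V W : Type*} [Fintype V] [Fintype W]
    {G : SimpleGraph V} {H : SimpleGraph W} {k n : ℕ} (hG : IsKConnected k G)
    (hH : IsKConnected k H) (hV : n ≤ Fintype.card V) (hW : n ≤ Fintype.card W) :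
    k * (n + 2 - 2 * k) - 1 ≤ treewidth (G □ H) := by
  classical
  refine (isBramble_lightCross hG hH hV hW).le_treewidth fun S hS ↦ ?_
  by_contra! hcard
  obtain ⟨p, hp, hpS⟩ := hS _ (Set.mem_image_of_mem _ hcard)
  exact hp.1 hpS

/-- The treewidth of the toroidal grid `C_n □ C_n` is at least `2 * n - 5`. -/
theorem treewidth_cycle_boxProd_ge (n : ℕ) (hn : 3 ≤ n) :
    2 * n - 5 ≤ treewidth (cycleGraph n □ cycleGraph n) := by
  have h := isKConnected_two_cycleGraph hn
  have := treewidth_cycle_boxProd_ge_general h h (Fintype.card_fin n).ge (Fintype.card_fin n).ge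
  lia
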